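/- Fix T > 0, a > 0 and θ₀ ∈ 𝒳ₙ. On the space C_{θ₀}([0,T], 𝒳ₙ) of continuous functions θ : [0,T] → 𝒳ₙ with θ_0 = θ₀, equipped with the supremum metric d(θ,ω) := sup_{t∈[0,T]} |θ_t − ω_t| (Euclidean norm on ℝⁿ), the multiradial Dirichlet energy J^a_T is a good rate function: for every c ≥ 0, the sublevel set {θ ∈ C_{θ₀}([0,T], 𝒳ₙ) : J^a_T(θ) ≤ c} is compact; in particular J^a_T is lower semicontinuous. -/

import Mathlib

open MeasureTheory Filter Set
open scoped Real Topology ENNReal Classical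

noncomputable section

/-- The configuration space `𝒳ₙ` of `n` ordered points on (a lift of) the circle:
`θ¹ < θ² < ⋯ < θⁿ < θ¹ + 2π`. -/
def Xspace (n : ℕ) : Set (Fin n → ℝ) :=
  {x | StrictMono x ∧ ∀ i j : Fin n, x i < x j + 2 * π}

/-- The value `θ^{j+1}`, with the convention `θ^{n+1} = θ¹ + 2π`. -/
def nextVal {n : ℕ} (x : Fin n → ℝ) (j : Fin n) : ℝ :=
  if h : (j : ℕ) + 1 < n then x ⟨(j : ℕ) + 1, h⟩ else x ⟨0, j.pos⟩ + 2 * π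

/-- The gap `θ^{j+1} - θ^j` (with wrap-around convention). -/
def gap {n : ℕ} (x : Fin n → ℝ) (j : Fin n) : ℝ := nextVal x j - x j

/-- The minimal gap `Δ(θ) = min_j (θ^{j+1} - θ^j)`. -/
def minGap {n : ℕ} (x : Fin n → ℝ) : ℝ := ⨅ j : Fin n, gap x j

/-- `d(θ) := max_j |2π/n - (θ^{j+1} - θ^j)|`. -/
def dGap {n : ℕ} (x : Fin n → ℝ) : ℝ := ⨆ j : Fin n, |2 * π / n - gap x j|

/-- `φ^j(θ) = ∑_{k ≠ j} cot((θ^j - θ^k)/2)`. -/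
def phi {n : ℕ} (x : Fin n → ℝ) (j : Fin n) : ℝ :=
  ∑ k ∈ Finset.univ.erase j, Real.cot ((x j - x k) / 2)

/-- `φ_a^j := (a/4) φ^j`. -/
def phiA {n : ℕ} (a : ℝ) (x : Fin n → ℝ) (j : Fin n) : ℝ := a / 4 * phi x j

/-- Absolute continuity of every coordinate of `θ` on `[0, T]`: each component is the
integral of a (locally) integrable function. -/
def AbsCont {n : ℕ} (T : ℝ) (θ : ℝ → Fin n → ℝ) : Prop :=
  ∃ v : ℝ → Fin n → ℝ, (∀ j, IntegrableOn (fun s => v s j) (Icc 0 T)) ∧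
    ∀ t ∈ Icc (0 : ℝ) T, ∀ j, θ t j = θ 0 j + ∫ s in (0 : ℝ)..t, v s j

/-- Truncated multiradial Dirichlet energy `J_T(θ)`. -/
def mEnergy (n : ℕ) (T : ℝ) (θ : ℝ → Fin n → ℝ) : ℝ≥0∞ :=
  if AbsCont T θ then
    ENNReal.ofReal (1 / 2) *
      ∫⁻ s in Ioc (0 : ℝ) T,
        ENNReal.ofReal (∑ j, (deriv (fun t => θ t j) s - 2 * phi (θ s) j) ^ 2)
  else ⊤

/-- Multiradial Dirichlet energy `J(θ) = lim_{T→∞} J_T(θ)`, the supremum of the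
nondecreasing family `J_T(θ)`. -/
def mEnergyInf (n : ℕ) (θ : ℝ → Fin n → ℝ) : ℝ≥0∞ := ⨆ T : ℝ, mEnergy n T θ

/-- Truncated multiradial Dirichlet energy with parameter `a`, `J^a_T(θ)`. -/
def mEnergyA (n : ℕ) (a T : ℝ) (θ : ℝ → Fin n → ℝ) : ℝ≥0∞ :=
  if AbsCont T θ then
    ENNReal.ofReal (1 / 2) *
      ∫⁻ s in Ioc (0 : ℝ) T,
        ENNReal.ofReal (∑ j, (deriv (fun t => θ t j) s - 2 * phiA a (θ s) j) ^ 2)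
  else ⊤

/-- `J^a(θ) = lim_{T→∞} J^a_T(θ)` (supremum of the nondecreasing family). -/
def mEnergyAInf (n : ℕ) (a : ℝ) (θ : ℝ → Fin n → ℝ) : ℝ≥0∞ := ⨆ T : ℝ, mEnergyA n a T θ

/-- Truncated Dirichlet energy `E_T(θ)`. -/
def dEnergy (n : ℕ) (T : ℝ) (θ : ℝ → Fin n → ℝ) : ℝ≥0∞ :=
  if AbsCont T θ then
    ENNReal.ofReal (1 / 2) *
      ∫⁻ s in Ioc (0 : ℝ) T, ENNReal.ofReal (∑ j, deriv (fun t => θ t j) s ^ 2)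
  else ⊤

/-- `E(θ) = lim_{T→∞} E_T(θ)` (supremum of the nondecreasing family). -/
def dEnergyInf (n : ℕ) (θ : ℝ → Fin n → ℝ) : ℝ≥0∞ := ⨆ T : ℝ, dEnergy n T θ

/-- `F(θ) := ∏_{j<k} |sin((θ^k - θ^j)/2)|`. -/
def Fprod {n : ℕ} (x : Fin n → ℝ) : ℝ :=
  ∏ j : Fin n, ∏ k ∈ Finset.univ.filter (fun k => j < k), |Real.sin ((x k - x j) / 2)|

/-- `G_a(θ) := -a log F(θ)`. -/
def Ga {n : ℕ} (a : ℝ) (x : Fin n → ℝ) : ℝ := -(a * Real.log (Fprod x))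

open scoped Gradient NNReal

/-!
On `𝒳ₙ` the drift `2φ_a` is `-∇G_a`, so a path of finite energy solves `θ' = u - ∇G_a(θ)` with a
square integrable control `u`, and `J^a_T(θ) = ‖u‖² / 2`. Integrating the chain rule gives
`∫ ‖u‖² = ∫ ‖θ'‖² + ∫ ‖∇G_a(θ)‖² + 2 (G_a(θ_T) - G_a(θ_0))`. As `G_a` is nonnegative with sublevel
sets closed in `ℝⁿ`, a bound on the energy keeps `θ` in a fixed sublevel set of `G_a` and makes it
`1/2`-Hölder with a fixed constant, so such paths form a compact set `K` by Arzelà–Ascoli. On `K`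
the primitive of `u`, namely `θ_t - θ_0 + ∫₀ᵗ ∇G_a(θ_s) ds`, depends continuously on `θ`, while
the primitives of the controls in a closed ball of `L²` form a closed set, since such a ball is
weakly compact. Hence the sublevel sets of `J^a_T` are closed subsets of compact sets.
-/

section AbsoluteContinuity

variable {X Y : Type*} [PseudoMetricSpace X] [PseudoMetricSpace Y]

lemma absolutelyContinuousOnInterval_of_dist_le {f : ℝ → X} {g : ℝ → Y} {a b C : ℝ}
    (hf : AbsolutelyContinuousOnInterval f a b)
    (h : ∀ s ∈ uIcc a b, ∀ t ∈ uIcc a b, dist (g s) (g t) ≤ C * dist (f s) (f t)) :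
    AbsolutelyContinuousOnInterval g a b := by
  have hCf := Tendsto.const_mul C hf
  rw [mul_zero] at hCf
  refine squeeze_zero' (Eventually.of_forall fun I => Finset.sum_nonneg fun i _ => dist_nonneg) ?_
    hCf
  filter_upwards [mem_inf_of_right (mem_principal_self _)] with I hI
  rw [Finset.mul_sum]
  exact Finset.sum_le_sum fun i hi => h _ (hI.1 i hi).1 _ (hI.1 i hi).2

variable {E : Type*} [NormedAddCommGroup E] [NormedSpace ℝ E]

lemma absolutelyContinuousOnInterval_of_eq_add_integral {x v : ℝ → E} {a b : ℝ}
    (hv : IntervalIntegrable v volume a b)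
    (hx : ∀ t ∈ uIcc a b, x t = x a + ∫ s in a..t, v s) :
    AbsolutelyContinuousOnInterval x a b := by
  refine absolutelyContinuousOnInterval_of_dist_le (C := 1)
    (hv.norm.absolutelyContinuousOnInterval_intervalIntegral left_mem_uIcc) fun s hs t ht => ?_
  have hint {r : ℝ} (hr : r ∈ uIcc a b) : IntervalIntegrable v volume a r :=
    hv.mono_set (uIcc_subset_uIcc_left hr)
  rw [hx s hs, hx t ht, dist_add_left, dist_eq_norm, Real.dist_eq, one_mul,
    intervalIntegral.integral_interval_sub_left (hint hs) (hint ht),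
    intervalIntegral.integral_interval_sub_left (hint hs).norm (hint ht).norm]
  exact intervalIntegral.norm_integral_le_abs_integral_norm

variable [CompleteSpace E]

lemma ae_hasDerivAt_of_eq_add_integral {x v : ℝ → E} {a b : ℝ}
    (hv : IntervalIntegrable v volume a b)
    (hx : ∀ t ∈ uIcc a b, x t = x a + ∫ s in a..t, v s) :
    ∀ᵐ t, t ∈ uIoc a b → HasDerivAt x (v t) t := by
  have hne : ∀ᵐ t : ℝ, t ≠ max a b := by simp [ae_iff, measure_singleton]
  filter_upwards [hv.ae_hasDerivAt_integral, hne] with t hderiv hmax ht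
  have hprimitive := (hderiv (uIoc_subset_uIcc ht) a left_mem_uIcc).const_add (x a)
  refine hprimitive.congr_of_eventuallyEq ?_
  filter_upwards [Icc_mem_nhds ht.1 (lt_of_le_of_ne ht.2 hmax)] with r hr using hx r hr

lemma sub_eq_integral_fderiv {V : E → ℝ} {x v : ℝ → E} {a b : ℝ}
    (hv : IntervalIntegrable v volume a b)
    (hx : ∀ t ∈ uIcc a b, x t = x a + ∫ s in a..t, v s)
    (hV : ∀ t ∈ uIcc a b, ContDiffAt ℝ 1 V (x t)) :
    V (x b) - V (x a) = ∫ t in a..b, fderiv ℝ V (x t) (v t) := by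
  have hxac := absolutelyContinuousOnInterval_of_eq_add_integral hv hx
  have hlocLip : LocallyLipschitzOn (x '' uIcc a b) V := by
    rintro _ ⟨t, ht, rfl⟩
    obtain ⟨K, s, hs, hK⟩ := (hV t ht).exists_lipschitzOnWith
    exact ⟨K, s, mem_nhdsWithin_of_mem_nhds hs, hK⟩
  obtain ⟨K, hK⟩ := hlocLip.exists_lipschitzOnWith_of_compact
    (isCompact_uIcc.image_of_continuousOn hxac.continuousOn)
  have hVxac : AbsolutelyContinuousOnInterval (fun t => V (x t)) a b :=
    absolutelyContinuousOnInterval_of_dist_le hxac fun s hs t ht =>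
      hK.dist_le_mul _ (mem_image_of_mem x hs) _ (mem_image_of_mem x ht)
  rw [← hVxac.integral_deriv_eq_sub]
  refine intervalIntegral.integral_congr_ae ?_
  filter_upwards [ae_hasDerivAt_of_eq_add_integral hv hx] with t hderiv ht
  have hVt := (hV t (uIoc_subset_uIcc ht)).differentiableAt one_ne_zero
  exact (hVt.hasFDerivAt.comp_hasDerivAt t (hderiv ht)).deriv

end AbsoluteContinuity

section Holder

lemma isCompact_setOf_holderWith {X Y : Type*} [PseudoMetricSpace X]
    [MetricSpace Y] [ProperSpace Y] {C r : ℝ≥0} (hr : 0 < r) (x₀ : X) (y₀ : Y) :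
    IsCompact {f : C(X, Y) | f x₀ = y₀ ∧ HolderWith C r f} := by
  refine ArzelaAscoli.isCompact_of_equicontinuous _ ?_ ?_
  · have himage : ContinuousMap.toFun '' {f : C(X, Y) | f x₀ = y₀ ∧ HolderWith C r f} =
        {g : X → Y | g x₀ = y₀ ∧ HolderWith C r g} :=
      Subset.antisymm (image_subset_iff.2 fun _ hf => hf)
        fun g hg => ⟨⟨g, hg.2.continuous hr⟩, hg, rfl⟩
    rw [himage]
    refine (isCompact_univ_pi fun x =>
      isCompact_closedBall y₀ (C * dist x x₀ ^ (r : ℝ))).of_isClosed_subset ?_ ?_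
    · simp only [HolderWith, ofPred_and, ofPred_forall]
      refine (isClosed_eq (continuous_apply x₀) continuous_const).inter
        (isClosed_iInter fun s => isClosed_iInter fun t => isClosed_le ?_ continuous_const)
      exact (continuous_apply s).edist (continuous_apply t)
    · intro g hg x _
      rw [Metric.mem_closedBall, ← hg.1]
      exact hg.2.dist_le x x₀
  · have hmodulus : Tendsto (fun d : ℝ => C * d ^ (r : ℝ)) (𝓝 0) (𝓝 0) := by
      have hcont : Continuous fun d : ℝ => C * d ^ (r : ℝ) :=
        continuous_const.mul (Real.continuous_rpow_const r.2)
      simpa [hr.ne'] using hcont.tendsto 0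
    exact Metric.equicontinuous_of_continuity_modulus _ hmodulus _ fun s t f => f.2.2.dist_le s t

lemma enorm_intervalIntegral_le_eLpNorm_two_mul {E : Type*} [NormedAddCommGroup E]
    [NormedSpace ℝ E] {w : ℝ → E} {s t : ℝ}
    (hw : AEStronglyMeasurable w (volume.restrict (uIoc s t))) :
    ‖∫ r in s..t, w r‖ₑ ≤
      eLpNorm w 2 (volume.restrict (uIoc s t)) * edist s t ^ (1 / 2 : ℝ) := by
  calc ‖∫ r in s..t, w r‖ₑ = ‖∫ r in uIoc s t, w r‖ₑ := by
        rw [← ofReal_norm, intervalIntegral.norm_intervalIntegral_eq, ofReal_norm]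
    _ ≤ eLpNorm w 1 (volume.restrict (uIoc s t)) := by
        rw [eLpNorm_one_eq_lintegral_enorm]
        exact enorm_integral_le_lintegral_enorm _
    _ ≤ _ := (eLpNorm_le_eLpNorm_mul_rpow_measure_univ one_le_two hw).trans_eq ?_
  have hvol : volume.restrict (uIoc s t) univ = edist s t := by
    rw [Measure.restrict_apply_univ, uIoc, Real.volume_Ioc, max_sub_min_eq_abs, edist_comm,
      edist_dist, Real.dist_eq, abs_sub_comm]
  rw [hvol]
  norm_num

end Holder

section WeakCompactness

variable {E : Type*} [NormedAddCommGroup E] [InnerProductSpace ℝ E] [CompleteSpace E]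

lemma inner_indicatorConstLp_Ioc_eq_inner_intervalIntegral {a b : ℝ} (t : Icc a b) (e : E)
    (u : Lp E 2 (volume.restrict (Ioc a b))) :
    inner ℝ (indicatorConstLp 2 (measurableSet_Ioc (a := a) (b := t)) (measure_ne_top _ _) e) u =
      inner ℝ e (∫ s in a..t, u s) := by
  rw [L2.inner_indicatorConstLp_eq_inner_setIntegral, intervalIntegral.integral_of_le t.2.1,
    Measure.restrict_restrict measurableSet_Ioc, inter_eq_left.2 (Ioc_subset_Ioc_right t.2.2)]

/-- The inner products of `u` with the indicators `1_{(a,t]} e` are weakly continuous in `u` and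
determine its primitive. -/
lemma isClosed_setOf_eq_integral_of_norm_le (a b K : ℝ) :
    IsClosed {g : Icc a b → E | ∃ u : Lp E 2 (volume.restrict (Ioc a b)),
      ‖u‖ ≤ K ∧ ∀ t : Icc a b, g t = ∫ s in a..t, u s} := by
  let evalInd (ℓ : WeakDual ℝ (Lp E 2 (volume.restrict (Ioc a b)))) (p : Icc a b × E) : ℝ :=
    ℓ (indicatorConstLp 2 (measurableSet_Ioc (a := a) (b := p.1)) (measure_ne_top _ _) p.2)
  have hclosed : IsClosed (evalInd '' (WeakDual.toStrongDual ⁻¹' Metric.closedBall 0 K)) :=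
    ((WeakDual.isCompact_closedBall 0 K).image
      (continuous_pi fun p => WeakDual.eval_continuous _)).isClosed
  have hcont : Continuous fun (g : Icc a b → E) (p : Icc a b × E) => inner ℝ p.2 (g p.1) := by
    fun_prop
  convert hclosed.preimage hcont using 1
  ext g
  constructor
  · rintro ⟨u, hu, hgu⟩
    refine ⟨StrongDual.toWeakDual (InnerProductSpace.toDual ℝ _ u), ?_, funext fun p => ?_⟩
    · exact mem_closedBall_zero_iff.2 (((InnerProductSpace.toDual ℝ _).norm_map u).trans_le hu)
    · calc inner ℝ u (indicatorConstLp 2 measurableSet_Ioc (measure_ne_top _ _) p.2) =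
            inner ℝ p.2 (∫ s in a..p.1, u s) := by
              rw [real_inner_comm, inner_indicatorConstLp_Ioc_eq_inner_intervalIntegral]
        _ = inner ℝ p.2 (g p.1) := by rw [hgu]
  · rintro ⟨ℓ, hℓ, hgℓ⟩
    refine ⟨(InnerProductSpace.toDual ℝ _).symm (WeakDual.toStrongDual ℓ), ?_,
      fun t => ext_inner_left ℝ fun e => ?_⟩
    · exact (LinearIsometryEquiv.norm_map _ _).trans_le (mem_closedBall_zero_iff.1 hℓ)
    · rw [← inner_indicatorConstLp_Ioc_eq_inner_intervalIntegral, real_inner_comm _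
        (indicatorConstLp _ _ _ _), InnerProductSpace.toDual_symm_apply]
      exact (congrFun hgℓ (t, e)).symm

end WeakCompactness

section ParametricIntegral

variable {E F : Type*} [PseudoMetricSpace E] [NormedAddCommGroup F] [NormedSpace ℝ F]

lemma continuousOn_intervalIntegral_comp_IccExtend {U : Set E} {g : E → F} (hg : ContinuousOn g U)
    {a b : ℝ} (hab : a ≤ b) (t : ℝ) :
    ContinuousOn (fun f : C(Icc a b, E) => ∫ s in a..t, g (IccExtend hab f s))
      {f | ∀ s, f s ∈ U} := by
  rw [continuousOn_iff_continuous_domRestrict]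
  refine intervalIntegral.continuous_parametric_intervalIntegral_of_continuous' ?_ a t
  have heval : Continuous fun p : {f : C(Icc a b, E) | ∀ s, f s ∈ U} × ℝ =>
      p.1.1 (projIcc a b hab p.2) := by
    fun_prop
  exact hg.comp_continuous heval fun p => p.1.2 _

end ParametricIntegral

section SquareIntegrable

variable {α E : Type*} [MeasurableSpace α] {μ : Measure α} [NormedAddCommGroup E]

lemma memLp_restrict_of_continuousOn [TopologicalSpace α] [OpensMeasurableSpace α] [T2Space α]
    [IsFiniteMeasureOnCompacts μ] {p : ℝ≥0∞} {f : α → E} {s : Set α} (hs : IsCompact s)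
    (hf : ContinuousOn f s) : MemLp f p (μ.restrict s) := by
  have : IsFiniteMeasure (μ.restrict s) := isFiniteMeasure_restrict.2 hs.measure_ne_top
  obtain ⟨C, hC⟩ := hs.exists_bound_of_continuousOn hf
  exact MemLp.of_bound (hf.aestronglyMeasurable_of_isCompact hs hs.measurableSet) C
    (ae_restrict_of_forall_mem hs.measurableSet hC)

lemma eLpNorm_two_le_ofReal_sqrt {f : α → E} (hf : MemLp f 2 μ) {M : ℝ}
    (hM : ∫ x, ‖f x‖ ^ 2 ∂μ ≤ M) : eLpNorm f 2 μ ≤ ENNReal.ofReal √M := by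
  rw [hf.eLpNorm_eq_integral_rpow_norm two_ne_zero ENNReal.ofNat_ne_top, ENNReal.toReal_ofNat,
    ← one_div, ← Real.sqrt_eq_rpow]
  simpa only [Real.rpow_two] using ENNReal.ofReal_le_ofReal (Real.sqrt_le_sqrt hM)

lemma integral_norm_sq_eq_norm_sq [InnerProductSpace ℝ E] (f : Lp E 2 μ) :
    ∫ x, ‖f x‖ ^ 2 ∂μ = ‖f‖ ^ 2 := by
  simp only [← real_inner_self_eq_norm_sq, L2.inner_def]

end SquareIntegrable

section ConfiningPotential

variable {E : Type*} [NormedAddCommGroup E] [NormedSpace ℝ E] {U : Set E} {V : E → ℝ}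

/-- A `C¹` potential on the state space `U` that keeps paths of bounded energy away from the
boundary of `U`: it is nonnegative, and its sublevel sets in `U` are closed in the whole space. -/
structure IsConfiningPotential (U : Set E) (V : E → ℝ) : Prop where
  contDiffAt : ∀ x ∈ U, ContDiffAt ℝ 1 V x
  nonneg : ∀ x ∈ U, 0 ≤ V x
  isClosed_sublevel : ∀ M, IsClosed {x | x ∈ U ∧ V x ≤ M}

lemma IsConfiningPotential.isCompact_setOf_holderWith [ProperSpace E]
    (hV : IsConfiningPotential U V) {X : Type*} [PseudoMetricSpace X]
    {C r : ℝ≥0} (hr : 0 < r) (t₀ : X) (x₀ : E) (M : ℝ) :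
    IsCompact {f : C(X, E) | (f t₀ = x₀ ∧ HolderWith C r f) ∧ ∀ t, f t ∈ U ∧ V (f t) ≤ M} := by
  have hclosed : IsClosed {f : C(X, E) | ∀ t, f t ∈ U ∧ V (f t) ≤ M} := by
    rw [ofPred_forall]
    exact isClosed_iInter fun t => (hV.isClosed_sublevel M).preimage (continuous_eval_const t)
  exact (_root_.isCompact_setOf_holderWith hr t₀ x₀).inter_right hclosed

end ConfiningPotential

section ControlledGradientFlow

variable {E : Type*} [NormedAddCommGroup E] [InnerProductSpace ℝ E] [CompleteSpace E]

/-- The path `θ` is, on `[0, T]`, an integral solution of `θ' = u - ∇V(θ)` driven by a square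
integrable control `u`; the Freidlin–Wentzell cost of `θ` for the drift `-∇V` is then `‖u‖²/2`. -/
structure IsControlledGradientFlow (V : E → ℝ) (T : ℝ) (u θ : ℝ → E) : Prop where
  memLp_control : MemLp u 2 (volume.restrict (Ioc 0 T))
  continuousOn : ContinuousOn θ (Icc 0 T)
  eq_add_integral : ∀ t ∈ Icc 0 T, θ t = θ 0 + ∫ s in 0..t, (u s - ∇ V (θ s))

lemma IsConfiningPotential.continuousOn_gradient {U : Set E} {V : E → ℝ}
    (hV : IsConfiningPotential U V) : ContinuousOn (∇ V) U := fun x hx =>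
  ((InnerProductSpace.toDual ℝ E).symm.continuous.continuousAt.comp
    ((hV.contDiffAt x hx).fderiv_right (m := 0) le_rfl).continuousAt).continuousWithinAt

namespace IsControlledGradientFlow

variable {U : Set E} {V : E → ℝ} {T : ℝ} {u θ : ℝ → E}

lemma mono (h : IsControlledGradientFlow V T u θ) {t : ℝ} (ht : t ≤ T) :
    IsControlledGradientFlow V t u θ where
  memLp_control := h.memLp_control.mono_measure
    (Measure.restrict_mono_set volume (Ioc_subset_Ioc_right ht))
  continuousOn := h.continuousOn.mono (Icc_subset_Icc_right ht)
  eq_add_integral s hs := h.eq_add_integral s ⟨hs.1, hs.2.trans ht⟩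

lemma memLp_gradient (h : IsControlledGradientFlow V T u θ) (hV : IsConfiningPotential U V)
    (hU : MapsTo θ (Icc 0 T) U) :
    MemLp (fun s => ∇ V (θ s)) 2 (volume.restrict (Ioc 0 T)) :=
  (memLp_restrict_of_continuousOn isCompact_Icc
    (hV.continuousOn_gradient.comp h.continuousOn hU)).mono_measure
      (Measure.restrict_mono_set volume Ioc_subset_Icc_self)

lemma memLp_velocity (h : IsControlledGradientFlow V T u θ) (hV : IsConfiningPotential U V)
    (hU : MapsTo θ (Icc 0 T) U) :
    MemLp (fun s => u s - ∇ V (θ s)) 2 (volume.restrict (Ioc 0 T)) :=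
  h.memLp_control.sub (h.memLp_gradient hV hU)

lemma intervalIntegrable_velocity (h : IsControlledGradientFlow V T u θ) (hT : 0 ≤ T)
    (hV : IsConfiningPotential U V) (hU : MapsTo θ (Icc 0 T) U) :
    IntervalIntegrable (fun s => u s - ∇ V (θ s)) volume 0 T :=
  (intervalIntegrable_iff_integrableOn_Ioc_of_le hT).2
    ((h.memLp_velocity hV hU).integrable one_le_two)

/-- The chain rule along `θ`, integrated, after expanding `‖u‖² = ‖θ' + ∇V(θ)‖²`. -/
lemma energy_identity (h : IsControlledGradientFlow V T u θ) (hT : 0 ≤ T)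
    (hV : IsConfiningPotential U V) (hU : MapsTo θ (Icc 0 T) U) :
    ∫ s in Ioc 0 T, ‖u s‖ ^ 2 =
      (∫ s in Ioc 0 T, ‖u s - ∇ V (θ s)‖ ^ 2) + (∫ s in Ioc 0 T, ‖∇ V (θ s)‖ ^ 2) +
        2 * (V (θ T) - V (θ 0)) := by
  have hu := h.memLp_control.integrable_norm_pow two_ne_zero
  have hw := (h.memLp_velocity hV hU).integrable_norm_pow two_ne_zero
  have hdiff : Integrable (fun s => ‖u s‖ ^ 2 - ‖u s - ∇ V (θ s)‖ ^ 2)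
      (volume.restrict (Ioc 0 T)) := hu.sub hw
  have hgrad := (h.memLp_gradient hV hU).integrable_norm_pow two_ne_zero
  have hchain : V (θ T) - V (θ 0) =
      ∫ s in 0..T, fderiv ℝ V (θ s) (u s - ∇ V (θ s)) := by
    refine sub_eq_integral_fderiv (h.intervalIntegrable_velocity hT hV hU) ?_ ?_ <;>
      rw [uIcc_of_le hT]
    · exact h.eq_add_integral
    · exact fun t ht => hV.contDiffAt _ (hU ht)
  have hpolar (s : ℝ) : 2 * fderiv ℝ V (θ s) (u s - ∇ V (θ s)) =
      ‖u s‖ ^ 2 - ‖u s - ∇ V (θ s)‖ ^ 2 - ‖∇ V (θ s)‖ ^ 2 := by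
    have hexpand := norm_add_sq_real (∇ V (θ s)) (u s - ∇ V (θ s))
    rw [add_sub_cancel, inner_gradient_left] at hexpand
    linarith
  rw [hchain, intervalIntegral.integral_of_le hT, ← integral_const_mul]
  simp only [hpolar]
  rw [integral_sub hdiff hgrad, integral_sub hu hw]
  ring

lemma potential_le (h : IsControlledGradientFlow V T u θ) (hV : IsConfiningPotential U V)
    (hU : MapsTo θ (Icc 0 T) U) {t : ℝ} (ht : t ∈ Icc 0 T) :
    V (θ t) ≤ V (θ 0) + (∫ s in Ioc 0 T, ‖u s‖ ^ 2) / 2 := by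
  have henergy := (h.mono ht.2).energy_identity ht.1 hV (hU.mono_left (Icc_subset_Icc_right ht.2))
  have hmono : ∫ s in Ioc 0 t, ‖u s‖ ^ 2 ≤ ∫ s in Ioc 0 T, ‖u s‖ ^ 2 :=
    setIntegral_mono_set (h.memLp_control.integrable_norm_pow two_ne_zero)
      (Eventually.of_forall fun s => by positivity) (Ioc_subset_Ioc_right ht.2).eventuallyLE
  have hvel : 0 ≤ ∫ s in Ioc 0 t, ‖u s - ∇ V (θ s)‖ ^ 2 := by positivity
  have hgrad : 0 ≤ ∫ s in Ioc 0 t, ‖∇ V (θ s)‖ ^ 2 := by positivity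
  linarith

lemma integral_norm_sq_velocity_le (h : IsControlledGradientFlow V T u θ) (hT : 0 ≤ T)
    (hV : IsConfiningPotential U V) (hU : MapsTo θ (Icc 0 T) U) :
    ∫ s in Ioc 0 T, ‖u s - ∇ V (θ s)‖ ^ 2 ≤ 2 * V (θ 0) + ∫ s in Ioc 0 T, ‖u s‖ ^ 2 := by
  have henergy := h.energy_identity hT hV hU
  have hgrad : 0 ≤ ∫ s in Ioc 0 T, ‖∇ V (θ s)‖ ^ 2 := by positivity
  have hend := hV.nonneg _ (hU (right_mem_Icc.2 hT))
  linarith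

lemma edist_le (h : IsControlledGradientFlow V T u θ) (hV : IsConfiningPotential U V)
    (hU : MapsTo θ (Icc 0 T) U) {s t : ℝ} (hs : s ∈ Icc 0 T) (ht : t ∈ Icc 0 T) :
    edist (θ s) (θ t) ≤ ENNReal.ofReal √(2 * V (θ 0) + ∫ r in Ioc 0 T, ‖u r‖ ^ 2) *
      edist s t ^ (1 / 2 : ℝ) := by
  have hT := hs.1.trans hs.2
  have hvel := h.memLp_velocity hV hU
  have hint {r : ℝ} (hr : r ∈ Icc 0 T) :=
    (h.mono hr.2).intervalIntegrable_velocity hr.1 hV (hU.mono_left (Icc_subset_Icc_right hr.2))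
  have hrestrict : volume.restrict (uIoc s t) ≤ volume.restrict (Ioc 0 T) :=
    Measure.restrict_mono_set volume (Ioc_subset_Ioc (le_min hs.1 ht.1) (max_le hs.2 ht.2))
  calc edist (θ s) (θ t) = ‖∫ r in s..t, (u r - ∇ V (θ r))‖ₑ := by
        rw [h.eq_add_integral s hs, h.eq_add_integral t ht, edist_add_left, edist_comm,
          edist_eq_enorm_sub, intervalIntegral.integral_interval_sub_left (hint ht) (hint hs)]
    _ ≤ eLpNorm (fun r => u r - ∇ V (θ r)) 2 (volume.restrict (uIoc s t)) *
          edist s t ^ (1 / 2 : ℝ) :=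
        enorm_intervalIntegral_le_eLpNorm_two_mul (hvel.1.mono_measure hrestrict)
    _ ≤ _ := by
        gcongr
        exact (eLpNorm_mono_measure _ hrestrict).trans
          (eLpNorm_two_le_ofReal_sqrt hvel (h.integral_norm_sq_velocity_le hT hV hU))

end IsControlledGradientFlow

end ControlledGradientFlow

section ControlPrimitive

variable {E : Type*} [NormedAddCommGroup E] [InnerProductSpace ℝ E] [CompleteSpace E]
  {U : Set E} {V : E → ℝ} {T : ℝ}

/-- The only candidate for the primitive of a control that drives the path `f`. -/
def controlPrimitive (V : E → ℝ) (hT : 0 ≤ T) (f : C(Icc 0 T, E)) (t : Icc 0 T) : E :=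
  f t - f ⟨0, left_mem_Icc.2 hT⟩ + ∫ s in 0..t, ∇ V (IccExtend hT f s)

lemma IsConfiningPotential.continuousOn_controlPrimitive (hV : IsConfiningPotential U V)
    (hT : 0 ≤ T) : ContinuousOn (controlPrimitive V hT) {f | ∀ s, f s ∈ U} :=
  continuousOn_pi.2 fun t =>
    ((continuous_eval_const t).sub (continuous_eval_const _)).continuousOn.add
      (continuousOn_intervalIntegral_comp_IccExtend hV.continuousOn_gradient hT t)

lemma IsConfiningPotential.isControlledGradientFlow_iff (hV : IsConfiningPotential U V)
    (hT : 0 ≤ T) {f : C(Icc 0 T, E)} (hf : ∀ s, f s ∈ U)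
    (u : Lp E 2 (volume.restrict (Ioc 0 T))) :
    IsControlledGradientFlow V T u (IccExtend hT f) ↔
      ∀ t : Icc 0 T, controlPrimitive V hT f t = ∫ s in 0..t, u s := by
  have hgrad : Continuous fun s => ∇ V (IccExtend hT f s) :=
    hV.continuousOn_gradient.comp_continuous (by fun_prop) fun s => hf _
  have hsplit (t : Icc 0 T) : ∫ s in 0..t, (u s - ∇ V (IccExtend hT f s)) =
      (∫ s in 0..t, u s) - ∫ s in 0..t, ∇ V (IccExtend hT f s) := by
    refine intervalIntegral.integral_sub ?_ (hgrad.intervalIntegrable _ _)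
    refine (intervalIntegrable_iff_integrableOn_Ioc_of_le t.2.1).2 ?_
    exact ((Lp.memLp u).integrable one_le_two).mono_measure
      (Measure.restrict_mono_set volume (Ioc_subset_Ioc_right t.2.2))
  have heq (t : Icc 0 T) :
      IccExtend hT f t = IccExtend hT f 0 + ∫ s in 0..t, (u s - ∇ V (IccExtend hT f s)) ↔
        controlPrimitive V hT f t = ∫ s in 0..t, u s := by
    rw [hsplit, IccExtend_val, IccExtend_left, controlPrimitive, ← eq_sub_iff_add_eq,
      sub_eq_iff_eq_add']
  refine ⟨fun h t => (heq t).1 (h.eq_add_integral t t.2), fun h => ⟨Lp.memLp u, ?_, ?_⟩⟩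
  · exact (by fun_prop : Continuous (IccExtend hT f)).continuousOn
  · exact fun t ht => (heq ⟨t, ht⟩).2 (h ⟨t, ht⟩)

end ControlPrimitive

theorem IsConfiningPotential.isCompact_setOf_isControlledGradientFlow {E : Type*}
    [NormedAddCommGroup E] [InnerProductSpace ℝ E] [ProperSpace E] {U : Set E} {V : E → ℝ} {T : ℝ}
    (hV : IsConfiningPotential U V) (hT : 0 ≤ T) (x₀ : E) (K : ℝ) :
    IsCompact {f : C(Icc 0 T, E) | (∀ s, f s ∈ U) ∧ f ⟨0, left_mem_Icc.2 hT⟩ = x₀ ∧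
      ∃ u : Lp E 2 (volume.restrict (Ioc 0 T)), ‖u‖ ≤ K ∧
        IsControlledGradientFlow V T u (IccExtend hT f)} := by
  have hcompact : IsCompact {f : C(Icc 0 T, E) |
      (f ⟨0, left_mem_Icc.2 hT⟩ = x₀ ∧ HolderWith (√(2 * V x₀ + K ^ 2)).toNNReal (1 / 2) f) ∧
        ∀ t, f t ∈ U ∧ V (f t) ≤ V x₀ + K ^ 2 / 2} :=
    hV.isCompact_setOf_holderWith (by norm_num) _ _ _
  have hclosed := ((hV.continuousOn_controlPrimitive hT).mono fun f hf t =>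
    (hf.2 t).1).preimage_isClosed_of_isClosed hcompact.isClosed
      (isClosed_setOf_eq_integral_of_norm_le 0 T K)
  convert hcompact.of_isClosed_subset hclosed inter_subset_left using 1
  ext f
  constructor
  · rintro ⟨hf, rfl, u, huK, h⟩
    have hU : MapsTo (IccExtend hT f) (Icc 0 T) U := fun t _ => hf _
    have hu : ∫ s in Ioc 0 T, ‖u s‖ ^ 2 ≤ K ^ 2 :=
      (integral_norm_sq_eq_norm_sq u).trans_le (by gcongr)
    refine ⟨⟨⟨rfl, fun s t => ?_⟩, fun t => ⟨hf t, ?_⟩⟩, u, huK,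
      (hV.isControlledGradientFlow_iff hT hf u).1 h⟩
    · have hle := h.edist_le hV hU s.2 t.2
      rw [IccExtend_val, IccExtend_val, IccExtend_left] at hle
      refine hle.trans (mul_le_mul ?_ (by simp [Subtype.edist_eq]) zero_le zero_le)
      exact ENNReal.ofReal_le_ofReal (Real.sqrt_le_sqrt (by linarith))
    · have hle := h.potential_le hV hU t.2
      rw [IccExtend_val, IccExtend_left] at hle
      linarith
  · rintro ⟨⟨⟨hf0, -⟩, hf⟩, u, huK, h⟩
    exact ⟨fun t => (hf t).1, hf0, u, huK,
      (hV.isControlledGradientFlow_iff hT (fun t => (hf t).1) u).2 h⟩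

section CoulombPotential

lemma sum_sum_erase_mul_sub {ι R : Type*} [Fintype ι] [DecidableEq ι] [CommRing R]
    {c : ι → ι → R} (hc : ∀ i j, c j i = -c i j) (v : ι → R) :
    ∑ i, ∑ j ∈ Finset.univ.erase i, c i j * (v i - v j) =
      2 * ∑ i, (∑ j ∈ Finset.univ.erase i, c i j) * v i := by
  have hswap : ∑ i, ∑ j ∈ Finset.univ.erase i, c i j * v j =
      -∑ i, ∑ j ∈ Finset.univ.erase i, c i j * v i := by
    rw [Finset.sum_comm' (t' := Finset.univ) (s' := fun i => Finset.univ.erase i)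
      (by simp [ne_comm])]
    simp only [← Finset.sum_neg_distrib, ← neg_mul, ← hc]
  simp only [mul_sub, Finset.sum_sub_distrib, hswap, Finset.sum_mul]
  ring

lemma hasDerivAt_log_sin {t : ℝ} (ht : Real.sin t ≠ 0) :
    HasDerivAt (fun s => Real.log (Real.sin s)) (Real.cot t) t := by
  simpa only [Real.cot_eq_cos_div_sin] using (Real.hasDerivAt_sin t).log ht

variable {n : ℕ} {a : ℝ} {x : Fin n → ℝ}

lemma continuous_Fprod : Continuous (Fprod : (Fin n → ℝ) → ℝ) := by
  unfold Fprod
  fun_prop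

lemma Fprod_nonneg (x : Fin n → ℝ) : 0 ≤ Fprod x :=
  Finset.prod_nonneg fun _ _ => Finset.prod_nonneg fun _ _ => abs_nonneg _

lemma Fprod_le_one (x : Fin n → ℝ) : Fprod x ≤ 1 :=
  Finset.prod_le_one (fun _ _ => Finset.prod_nonneg fun _ _ => abs_nonneg _) fun _ _ =>
    Finset.prod_le_one (fun _ _ => abs_nonneg _) fun _ _ => Real.abs_sin_le_one _

lemma Fprod_ne_zero_iff : Fprod x ≠ 0 ↔ ∀ j k, j ≠ k → Real.sin ((x j - x k) / 2) ≠ 0 := by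
  have hcomm (j k : Fin n) : Real.sin ((x k - x j) / 2) = -Real.sin ((x j - x k) / 2) := by
    rw [← Real.sin_neg]
    ring_nf
  have hlt : Fprod x ≠ 0 ↔ ∀ j k, j < k → Real.sin ((x k - x j) / 2) ≠ 0 := by
    simp [Fprod, Finset.prod_ne_zero_iff]
  rw [hlt]
  refine ⟨fun h j k hjk => ?_, fun h j k hjk => h k j hjk.ne'⟩
  rcases hjk.lt_or_gt with hjk | hkj
  · exact neg_ne_zero.1 (hcomm j k ▸ h j k hjk)
  · exact h k j hkj

lemma mem_Xspace_iff_Fprod_ne_zero :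
    x ∈ Xspace n ↔ (Monotone x ∧ ∀ i j, x i ≤ x j + 2 * π) ∧ Fprod x ≠ 0 := by
  rw [Fprod_ne_zero_iff]
  constructor
  · rintro ⟨hmono, hwrap⟩
    refine ⟨⟨hmono.monotone, fun i j => (hwrap i j).le⟩, fun j k hjk h => ?_⟩
    have hzero := (Real.sin_eq_zero_iff_of_lt_of_lt (by linarith [hwrap k j])
      (by linarith [hwrap j k])).1 h
    exact hmono.injective.ne hjk (by linarith)
  · rintro ⟨⟨hmono, hwrap⟩, hsin⟩
    refine ⟨hmono.strictMono_of_injective fun i j hij => ?_, fun i j => (hwrap i j).lt_of_ne ?_⟩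
    · by_contra hne
      exact hsin i j hne (by simp [hij])
    · intro hij
      rcases eq_or_ne i j with rfl | hne
      · linarith [Real.pi_pos]
      · exact hsin i j hne (by simp [hij])

lemma Ga_nonneg (ha : 0 ≤ a) (x : Fin n → ℝ) : 0 ≤ Ga a x :=
  neg_nonneg.2 (mul_nonpos_of_nonneg_of_nonpos ha (Real.log_nonpos (Fprod_nonneg x)
    (Fprod_le_one x)))

lemma Ga_le_iff (ha : 0 < a) (hx : Fprod x ≠ 0) {M : ℝ} :
    Ga a x ≤ M ↔ Real.exp (-(M / a)) ≤ Fprod x := by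
  rw [← Real.le_log_iff_exp_le ((Fprod_nonneg x).lt_of_ne' hx), Ga, neg_le, ← neg_div,
    div_le_iff₀' ha]

lemma isClosed_setOf_mem_Xspace_and_Ga_le (ha : 0 < a) (M : ℝ) :
    IsClosed {x | x ∈ Xspace n ∧ Ga a x ≤ M} := by
  have hset : {x | x ∈ Xspace n ∧ Ga a x ≤ M} =
      ({x | Monotone x} ∩ {x | ∀ i j, x i ≤ x j + 2 * π}) ∩
        {x | Real.exp (-(M / a)) ≤ Fprod x} := by
    ext x
    constructor
    · rintro ⟨hx, hM⟩
      obtain ⟨hmono, hF⟩ := mem_Xspace_iff_Fprod_ne_zero.1 hx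
      exact ⟨hmono, (Ga_le_iff ha hF).1 hM⟩
    · rintro ⟨hmono, hM⟩
      have hF : Fprod x ≠ 0 := ((Real.exp_pos _).trans_le hM).ne'
      exact ⟨mem_Xspace_iff_Fprod_ne_zero.2 ⟨hmono, hF⟩, (Ga_le_iff ha hF).2 hM⟩
  have hwrap : IsClosed {x : Fin n → ℝ | ∀ i j, x i ≤ x j + 2 * π} := by
    simp only [ofPred_forall]
    exact isClosed_iInter fun i => isClosed_iInter fun j => isClosed_le (by fun_prop) (by fun_prop)
  rw [hset]
  exact (isClosed_monotone.inter hwrap).inter (isClosed_le continuous_const continuous_Fprod)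

lemma Ga_eq_sum_log_sin (hx : Fprod x ≠ 0) :
    Ga a x = -(a / 2) *
      ∑ j, ∑ k ∈ Finset.univ.erase j, Real.log (Real.sin ((x j - x k) / 2)) := by
  have hsymm (j k : Fin n) : Real.log (Real.sin ((x j - x k) / 2)) =
      Real.log (Real.sin ((x k - x j) / 2)) := by
    rw [← Real.log_neg_eq_log, ← Real.sin_neg]
    ring_nf
  have hlog : Real.log (Fprod x) =
      ∑ j, ∑ k ∈ Finset.univ.filter (j < ·), Real.log (Real.sin ((x j - x k) / 2)) := by
    simp only [Fprod, Finset.prod_ne_zero_iff] at hx ⊢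
    rw [Real.log_prod fun j hj => Finset.prod_ne_zero_iff.2 (hx j hj)]
    refine Finset.sum_congr rfl fun j hj => ?_
    rw [Real.log_prod (hx j hj)]
    simp only [Real.log_abs, hsymm j]
  have hpairs := Finset.sum_sum_Ioi_add_eq_sum_sum_off_diag
    fun j k : Fin n => Real.log (Real.sin ((x k - x j) / 2))
  simp only [Finset.compl_singleton, ← Finset.filter_lt_eq_Ioi] at hpairs
  simp only [hsymm _ _, ← two_mul, ← Finset.mul_sum] at hpairs
  rw [Ga, hlog, ← hpairs]
  ring

lemma Ga_eventuallyEq_sum_log_sin {x : EuclideanSpace ℝ (Fin n)} (hx : Fprod x.ofLp ≠ 0) :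
    (fun y : EuclideanSpace ℝ (Fin n) => Ga a y.ofLp) =ᶠ[𝓝 x] fun y => -(a / 2) *
      ∑ j, ∑ k ∈ Finset.univ.erase j, Real.log (Real.sin ((y j - y k) / 2)) := by
  have hcont : Continuous fun y : EuclideanSpace ℝ (Fin n) => Fprod y.ofLp :=
    continuous_Fprod.comp (PiLp.continuous_ofLp 2 _)
  filter_upwards [hcont.continuousAt.eventually_ne hx] with y hy
  exact Ga_eq_sum_log_sin hy

lemma contDiffAt_Ga {x : EuclideanSpace ℝ (Fin n)} (hx : Fprod x.ofLp ≠ 0) :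
    ContDiffAt ℝ 1 (fun y : EuclideanSpace ℝ (Fin n) => Ga a y.ofLp) x := by
  refine ContDiffAt.congr_of_eventuallyEq ?_ (Ga_eventuallyEq_sum_log_sin hx)
  refine contDiffAt_const.mul (ContDiffAt.sum fun j _ => ContDiffAt.sum fun k hk => ?_)
  exact ContDiffAt.log (by fun_prop)
    (Fprod_ne_zero_iff.1 hx j k (Finset.ne_of_mem_erase hk).symm)

lemma hasFDerivAt_log_sin_half_sub {x : EuclideanSpace ℝ (Fin n)} {j k : Fin n}
    (h : Real.sin ((x j - x k) / 2) ≠ 0) :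
    HasFDerivAt (fun y : EuclideanSpace ℝ (Fin n) => Real.log (Real.sin ((y j - y k) / 2)))
      (Real.cot ((x j - x k) / 2) • (2 : ℝ)⁻¹ •
        (EuclideanSpace.proj j - EuclideanSpace.proj k : EuclideanSpace ℝ (Fin n) →L[ℝ] ℝ)) x := by
  have hlin := (((EuclideanSpace.proj (𝕜 := ℝ) j).hasFDerivAt (x := x)).fun_sub
    (EuclideanSpace.proj (𝕜 := ℝ) k).hasFDerivAt).const_mul (2 : ℝ)⁻¹
  simp only [div_eq_inv_mul] at h ⊢
  exact (hasDerivAt_log_sin h).comp_hasFDerivAt x hlin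

lemma hasGradientAt_Ga {x : EuclideanSpace ℝ (Fin n)} (hx : Fprod x.ofLp ≠ 0) :
    HasGradientAt (fun y : EuclideanSpace ℝ (Fin n) => Ga a y.ofLp)
      (-WithLp.toLp 2 fun j => 2 * phiA a x.ofLp j) x := by
  have hsum := (HasFDerivAt.fun_sum fun j (_ : j ∈ Finset.univ) => HasFDerivAt.fun_sum
    fun k (hk : k ∈ Finset.univ.erase j) => hasFDerivAt_log_sin_half_sub
      (Fprod_ne_zero_iff.1 hx j k (Finset.ne_of_mem_erase hk).symm)).const_mul (-(a / 2))
  refine hasGradientAt_iff_hasFDerivAt.2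
    ((hsum.congr_of_eventuallyEq (Ga_eventuallyEq_sum_log_sin hx)).congr_fderiv ?_)
  ext v
  have hanti (i j : Fin n) : Real.cot ((x j - x i) / 2) = -Real.cot ((x i - x j) / 2) := by
    rw [← neg_sub, neg_div, Real.cot_eq_cos_div_sin, Real.cot_eq_cos_div_sin, Real.cos_neg,
      Real.sin_neg, div_neg]
  have hv := sum_sum_erase_mul_sub hanti v
  simp only [smul_apply, sum_apply, sub_apply, PiLp.proj_apply,
    InnerProductSpace.toDual_apply_apply, inner_neg_left, PiLp.inner_apply, RCLike.inner_apply,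
    conj_trivial, smul_eq_mul, mul_left_comm _ (2 : ℝ)⁻¹, ← Finset.mul_sum, hv]
  simp only [phiA, phi, mul_comm (v _), mul_assoc, ← Finset.mul_sum]
  ring

lemma isConfiningPotential_Ga (ha : 0 < a) :
    IsConfiningPotential (WithLp.ofLp ⁻¹' Xspace n)
      fun x : EuclideanSpace ℝ (Fin n) => Ga a x.ofLp where
  contDiffAt _ hx := contDiffAt_Ga (mem_Xspace_iff_Fprod_ne_zero.1 hx).2
  nonneg _ _ := Ga_nonneg ha.le _
  isClosed_sublevel M :=
    (isClosed_setOf_mem_Xspace_and_Ga_le ha M).preimage (PiLp.continuous_ofLp 2 _)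

end CoulombPotential

section Primitive

/-- The path `θ` is absolutely continuous on `[0, T]` with velocity `v`. -/
structure IsPrimitiveOn {E : Type*} [NormedAddCommGroup E] [NormedSpace ℝ E] (T : ℝ)
    (θ v : ℝ → E) : Prop where
  integrableOn : IntegrableOn v (Ioc 0 T)
  eq_add_integral : ∀ t ∈ Icc 0 T, θ t = θ 0 + ∫ s in 0..t, v s

lemma IsPrimitiveOn.ae_hasDerivAt {E : Type*} [NormedAddCommGroup E] [NormedSpace ℝ E]
    [CompleteSpace E] {T : ℝ} {θ v : ℝ → E} (h : IsPrimitiveOn T θ v) (hT : 0 ≤ T) :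
    ∀ᵐ t ∂volume.restrict (Ioc 0 T), HasDerivAt θ (v t) t := by
  rw [ae_restrict_iff' measurableSet_Ioc, ← uIoc_of_le hT]
  refine ae_hasDerivAt_of_eq_add_integral
    ((intervalIntegrable_iff_integrableOn_Ioc_of_le hT).2 h.integrableOn) ?_
  rw [uIcc_of_le hT]
  exact h.eq_add_integral

variable {n : ℕ} {T : ℝ}

lemma isPrimitiveOn_euclidean_iff {θ v : ℝ → EuclideanSpace ℝ (Fin n)} :
    IsPrimitiveOn T θ v ↔ ∀ j, IsPrimitiveOn T (fun t => θ t j) fun t => v t j := by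
  have hint : IntegrableOn v (Ioc 0 T) ↔ ∀ j, IntegrableOn (fun t => v t j) (Ioc 0 T) :=
    ⟨fun h j => (EuclideanSpace.proj (𝕜 := ℝ) j).integrable_comp h, Integrable.of_eval_piLp⟩
  have heval (h : IntegrableOn v (Ioc 0 T)) {t : ℝ} (ht : t ∈ Icc 0 T) (j : Fin n) :
      (∫ s in 0..t, v s) j = ∫ s in 0..t, v s j := by
    simp only [intervalIntegral.integral_of_le ht.1]
    exact eval_integral_piLp (fun j => (hint.1 h j).mono_set (Ioc_subset_Ioc_right ht.2)) j
  constructor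
  · intro h j
    refine ⟨hint.1 h.integrableOn j, fun t ht => ?_⟩
    rw [← heval h.integrableOn ht, ← PiLp.add_apply, ← h.eq_add_integral t ht]
  · intro h
    have hv := hint.2 fun j => (h j).integrableOn
    refine ⟨hv, fun t ht => PiLp.ext fun j => ?_⟩
    rw [PiLp.add_apply, heval hv ht]
    exact (h j).eq_add_integral t ht

lemma absCont_ofLp_iff {θ : ℝ → EuclideanSpace ℝ (Fin n)} :
    AbsCont T (fun t => (θ t).ofLp) ↔ ∃ v, IsPrimitiveOn T θ v := by
  constructor
  · rintro ⟨v, hv, hθ⟩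
    exact ⟨fun t => WithLp.toLp 2 (v t),
      isPrimitiveOn_euclidean_iff.2 fun j =>
        ⟨(hv j).mono_set Ioc_subset_Icc_self, fun t ht => hθ t ht j⟩⟩
  · rintro ⟨v, h⟩
    have hj := isPrimitiveOn_euclidean_iff.1 h
    exact ⟨fun t => (v t).ofLp,
      fun j => (integrableOn_Icc_iff_integrableOn_Ioc (by finiteness)).2 (hj j).integrableOn,
      fun t ht j => (hj j).eq_add_integral t ht⟩

lemma eLpNorm_two_sq_eq_lintegral_sum_sq {α : Type*} [MeasurableSpace α] {μ : Measure α}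
    (f : α → EuclideanSpace ℝ (Fin n)) :
    eLpNorm f 2 μ ^ 2 = ∫⁻ x, ENNReal.ofReal (∑ j, f x j ^ 2) ∂μ := by
  have h := eLpNorm_nnreal_pow_eq_lintegral (μ := μ) (f := f) (p := 2) two_ne_zero
  simp only [NNReal.coe_ofNat, ENNReal.coe_ofNat, ENNReal.rpow_ofNat] at h
  simp only [h, ← EuclideanSpace.real_norm_sq_eq, ENNReal.ofReal_pow (norm_nonneg _), ofReal_norm]

lemma IsPrimitiveOn.mEnergyA_eq {θ v : ℝ → EuclideanSpace ℝ (Fin n)} (h : IsPrimitiveOn T θ v)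
    (hT : 0 ≤ T) (a : ℝ) :
    mEnergyA n a T (fun t => (θ t).ofLp) = ENNReal.ofReal (1 / 2) *
      eLpNorm (fun s => v s - WithLp.toLp 2 fun j => 2 * phiA a (θ s).ofLp j) 2
        (volume.restrict (Ioc 0 T)) ^ 2 := by
  rw [mEnergyA, if_pos (absCont_ofLp_iff.2 ⟨v, h⟩), eLpNorm_two_sq_eq_lintegral_sum_sq]
  congr 1
  refine lintegral_congr_ae ?_
  filter_upwards [h.ae_hasDerivAt hT] with s hs
  have hderiv (j : Fin n) : deriv (fun t => θ t j) s = v s j :=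
    (((EuclideanSpace.proj (𝕜 := ℝ) j).hasFDerivAt).comp_hasDerivAt s hs).deriv
  simp only [hderiv, PiLp.sub_apply]

lemma mEnergyA_le_ofReal_iff {θ : ℝ → EuclideanSpace ℝ (Fin n)} (hT : 0 ≤ T) (a : ℝ) {c : ℝ}
    (hc : 0 ≤ c) :
    mEnergyA n a T (fun t => (θ t).ofLp) ≤ ENNReal.ofReal c ↔ ∃ v, IsPrimitiveOn T θ v ∧
      eLpNorm (fun s => v s - WithLp.toLp 2 fun j => 2 * phiA a (θ s).ofLp j) 2
        (volume.restrict (Ioc 0 T)) ≤ ENNReal.ofReal √(2 * c) := by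
  have hhalf (N : ℝ≥0∞) : ENNReal.ofReal (1 / 2) * N ^ 2 ≤ ENNReal.ofReal c ↔
      N ≤ ENNReal.ofReal √(2 * c) := by
    have hsqrt : ENNReal.ofReal c =
        ENNReal.ofReal (1 / 2) * ENNReal.ofReal √(2 * c) ^ 2 := by
      rw [← ENNReal.ofReal_pow (Real.sqrt_nonneg _), Real.sq_sqrt (by positivity),
        ← ENNReal.ofReal_mul (by positivity)]
      ring_nf
    rw [hsqrt, ENNReal.mul_le_mul_iff_right (by simp) ENNReal.ofReal_ne_top,
      ENNReal.pow_le_pow_left_iff two_ne_zero]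
  constructor
  · intro h
    obtain ⟨v, hv⟩ : ∃ v, IsPrimitiveOn T θ v := by
      by_contra hnot
      rw [mEnergyA, if_neg (absCont_ofLp_iff.not.2 hnot)] at h
      exact ENNReal.ofReal_ne_top (top_le_iff.1 h)
    exact ⟨v, hv, (hhalf _).1 (hv.mEnergyA_eq hT a ▸ h)⟩
  · rintro ⟨v, hv, h⟩
    rw [hv.mEnergyA_eq hT]
    exact (hhalf _).2 h

end Primitive

section GradientFlow

lemma IsConfiningPotential.exists_isControlledGradientFlow_iff {E : Type*} [NormedAddCommGroup E]
    [InnerProductSpace ℝ E] [CompleteSpace E] {U : Set E} {V : E → ℝ} {T K : ℝ}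
    (hV : IsConfiningPotential U V) (hT : 0 ≤ T) {f : C(Icc 0 T, E)} (hf : ∀ s, f s ∈ U)
    (hK : 0 ≤ K) :
    (∃ u : Lp E 2 (volume.restrict (Ioc 0 T)), ‖u‖ ≤ K ∧
        IsControlledGradientFlow V T u (IccExtend hT f)) ↔
      ∃ v, IsPrimitiveOn T (IccExtend hT f) v ∧
        eLpNorm (fun s => v s + ∇ V (IccExtend hT f s)) 2 (volume.restrict (Ioc 0 T)) ≤
          ENNReal.ofReal K := by
  have hcont : Continuous (IccExtend hT f) := by fun_prop
  have hgrad : Continuous fun s => ∇ V (IccExtend hT f s) :=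
    hV.continuousOn_gradient.comp_continuous hcont fun s => hf _
  constructor
  · rintro ⟨u, huK, h⟩
    have hv := (h.memLp_velocity hV fun s _ => hf _).integrable one_le_two
    refine ⟨_, ⟨hv, h.eq_add_integral⟩, ?_⟩
    simp only [sub_add_cancel]
    rw [← Lp.enorm_def, ← ofReal_norm]
    exact ENNReal.ofReal_le_ofReal huK
  · rintro ⟨v, h, hle⟩
    have hu : MemLp (fun s => v s + ∇ V (IccExtend hT f s)) 2 (volume.restrict (Ioc 0 T)) :=
      ⟨h.integrableOn.aestronglyMeasurable.add hgrad.aestronglyMeasurable,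
        hle.trans_lt ENNReal.ofReal_lt_top⟩
    refine ⟨hu.toLp, ?_, Lp.memLp _, hcont.continuousOn, fun t ht => ?_⟩
    · rw [Lp.norm_toLp]
      exact ENNReal.toReal_le_of_le_ofReal hK hle
    · rw [h.eq_add_integral t ht, intervalIntegral.integral_of_le ht.1,
        intervalIntegral.integral_of_le ht.1]
      congr 1
      refine integral_congr_ae ?_
      filter_upwards [ae_restrict_of_ae_restrict_of_subset (Ioc_subset_Ioc_right ht.2)
        hu.coeFn_toLp] with s hs
      rw [hs, add_sub_cancel_right]

lemma mEnergyA_le_ofReal_iff_exists_isControlledGradientFlow {n : ℕ} {T a c : ℝ} (hT : 0 ≤ T)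
    (ha : 0 < a) (hc : 0 ≤ c) {f : C(Icc 0 T, EuclideanSpace ℝ (Fin n))}
    (hf : ∀ s, (f s).ofLp ∈ Xspace n) :
    mEnergyA n a T (fun t => (IccExtend hT f t).ofLp) ≤ ENNReal.ofReal c ↔
      ∃ u : Lp (EuclideanSpace ℝ (Fin n)) 2 (volume.restrict (Ioc 0 T)), ‖u‖ ≤ √(2 * c) ∧
        IsControlledGradientFlow (fun x => Ga a x.ofLp) T u (IccExtend hT f) := by
  have hgrad (s : ℝ) : ∇ (fun x : EuclideanSpace ℝ (Fin n) => Ga a x.ofLp) (IccExtend hT f s) =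
      -WithLp.toLp 2 fun j => 2 * phiA a (IccExtend hT f s).ofLp j :=
    (hasGradientAt_Ga (mem_Xspace_iff_Fprod_ne_zero.1 (hf _)).2).gradient
  have hV := isConfiningPotential_Ga (n := n) ha
  rw [mEnergyA_le_ofReal_iff hT a hc,
    hV.exists_isControlledGradientFlow_iff hT hf (Real.sqrt_nonneg _)]
  simp only [hgrad, ← sub_eq_add_neg]

end GradientFlow

lemma lowerSemicontinuousOn_of_isClosed_setOf_le_ofReal {X : Type*} [TopologicalSpace X]
    {s : Set X} {F : X → ℝ≥0∞}
    (h : ∀ c : ℝ, 0 ≤ c → IsClosed {x | x ∈ s ∧ F x ≤ ENNReal.ofReal c}) :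
    LowerSemicontinuousOn F s := by
  refine lowerSemicontinuousOn_iff_preimage_Iic.2 fun b => ?_
  rcases eq_or_ne b ⊤ with rfl | hb
  · exact ⟨univ, isClosed_univ, by simp⟩
  · refine ⟨_, h b.toReal ENNReal.toReal_nonneg, ?_⟩
    rw [ENNReal.ofReal_toReal hb]
    exact (inter_eq_self_of_subset_right fun x hx => hx.1).symm

/-- On the space `C_{θ₀}([0,T], 𝒳ₙ)` of continuous paths started at
`θ₀ ∈ 𝒳ₙ` (with the supremum metric coming from the Euclidean norm on `ℝⁿ`), the
multiradial Dirichlet energy `J^a_T` is a good rate function: its sublevel sets are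
compact; in particular it is lower semicontinuous. -/
theorem mEnergyA_good_rate_function
    (n : ℕ) (hn : 1 ≤ n) (T a : ℝ) (hT : 0 < T) (ha : 0 < a)
    (θ₀ : Fin n → ℝ) (hθ₀ : θ₀ ∈ Xspace n) :
    (∀ c : ℝ, 0 ≤ c →
      IsCompact {f : ContinuousMap (Icc (0 : ℝ) T) (EuclideanSpace ℝ (Fin n)) |
        (∀ s : Icc (0 : ℝ) T, (fun j => f s j) ∈ Xspace n) ∧
        (fun j => f ⟨0, Set.left_mem_Icc.mpr hT.le⟩ j) = θ₀ ∧
        mEnergyA n a T (fun t j => f (Set.projIcc 0 T hT.le t) j) ≤ ENNReal.ofReal c}) ∧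
    LowerSemicontinuousOn
      (fun f : ContinuousMap (Icc (0 : ℝ) T) (EuclideanSpace ℝ (Fin n)) =>
        mEnergyA n a T (fun t j => f (Set.projIcc 0 T hT.le t) j))
      {f | (∀ s : Icc (0 : ℝ) T, (fun j => f s j) ∈ Xspace n) ∧
        (fun j => f ⟨0, Set.left_mem_Icc.mpr hT.le⟩ j) = θ₀} := by
  have hcompact (c : ℝ) (hc : 0 ≤ c) :
      IsCompact {f : ContinuousMap (Icc (0 : ℝ) T) (EuclideanSpace ℝ (Fin n)) |
        (∀ s : Icc (0 : ℝ) T, (fun j => f s j) ∈ Xspace n) ∧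
        (fun j => f ⟨0, Set.left_mem_Icc.mpr hT.le⟩ j) = θ₀ ∧
        mEnergyA n a T (fun t j => f (Set.projIcc 0 T hT.le t) j) ≤ ENNReal.ofReal c} := by
    convert (isConfiningPotential_Ga ha).isCompact_setOf_isControlledGradientFlow hT.le
      (WithLp.toLp 2 θ₀) √(2 * c) using 1
    ext f
    exact and_congr_right fun hf => and_congr (WithLp.ofLp_injective 2).eq_iff
      (mEnergyA_le_ofReal_iff_exists_isControlledGradientFlow hT.le ha hc hf)
  refine ⟨hcompact, lowerSemicontinuousOn_of_isClosed_setOf_le_ofReal fun c hc => ?_⟩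
  simpa only [mem_ofPred_eq, and_assoc] using (hcompact c hc).isClosed

end
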